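/- arXiv:1308.6117 — 2 statements merged into one kernel-verified Lean document; each statement's English description precedes it below -/
import Mathlib

section
/- Let A be a unital C*-algebra, (X, ‖·‖_X) a quasi-normed A-bimodule with modulus of concavity C ≥ 1, and δ : A → X a derivation. Then the set J := {x ∈ A : the linear map u ↦ δ(xu) from A to X is bounded} is a norm-closed two-sided ideal of A. Moreover J = {x ∈ A : the linear map u ↦ x·δ(u) from A to X is bounded}. -/
open MulOpposite

/-!
By the Leibniz rule, `u ↦ δ (x * u)` and `u ↦ x • δ u` differ by the bounded map `u ↦ δ x * u`,
so the two descriptions of `J` agree; the first is visibly stable under right multiplication and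
the second under left multiplication. If `y n → x` with `y n ∈ J`, then the bounded maps
`u ↦ y n • δ u` converge pointwise to `u ↦ x • δ u`, so closedness is a case of the
Banach-Steinhaus theorem. The latter survives in the quasi-normed setting, although a quasi-norm
need be neither continuous nor locally convex: passing to closures in the Baire category argument
only costs factors of the modulus of concavity.
-/

open Filter Metric Topology

/-- A quasi-seminorm with modulus of concavity `C`: a quasi-norm that may vanish at nonzero
vectors. Nonnegativity is a consequence of the axioms (`IsQuasiSeminorm.nonneg`). -/
structure IsQuasiSeminorm (𝕜 : Type*) {X : Type*} [NormedField 𝕜] [AddCommGroup X] [Module 𝕜 X]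
    (q : X → ℝ) (C : ℝ) : Prop where
  one_le : 1 ≤ C
  map_smul : ∀ (c : 𝕜) (x : X), q (c • x) = ‖c‖ * q x
  map_add_le : ∀ x y : X, q (x + y) ≤ C * (q x + q y)

/-- Boundedness of a map from a normed group to a space measured by `q`. It is stated for bare
functions, so that it also applies to maps that are not yet known to be linear. -/
def IsQuasiBounded {E X : Type*} [Norm E] (q : X → ℝ) (f : E → X) : Prop :=
  ∃ K : ℝ, 0 ≤ K ∧ ∀ u : E, q (f u) ≤ K * ‖u‖

namespace IsQuasiSeminorm

variable {𝕜 X : Type*} [NormedField 𝕜] [AddCommGroup X] [Module 𝕜 X] {q : X → ℝ} {C : ℝ}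

theorem modulus_pos (hq : IsQuasiSeminorm 𝕜 q C) : 0 < C :=
  zero_lt_one.trans_le hq.one_le

theorem map_zero (hq : IsQuasiSeminorm 𝕜 q C) : q 0 = 0 := by
  simpa using hq.map_smul 0 0

theorem map_neg (hq : IsQuasiSeminorm 𝕜 q C) (x : X) : q (-x) = q x := by
  simpa using hq.map_smul (-1) x

theorem map_sub_rev (hq : IsQuasiSeminorm 𝕜 q C) (x y : X) : q (x - y) = q (y - x) := by
  rw [← neg_sub, hq.map_neg]

theorem map_sub_le (hq : IsQuasiSeminorm 𝕜 q C) (x y : X) : q (x - y) ≤ C * (q x + q y) := by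
  simpa only [sub_eq_add_neg, hq.map_neg] using hq.map_add_le x (-y)

theorem nonneg (hq : IsQuasiSeminorm 𝕜 q C) (x : X) : 0 ≤ q x := by
  have h : 0 ≤ C * (q x + q x) := by simpa only [sub_self, hq.map_zero] using hq.map_sub_le x x
  linarith [nonneg_of_mul_nonneg_right h hq.modulus_pos]

theorem le_add_map_sub (hq : IsQuasiSeminorm 𝕜 q C) (x y : X) :
    q x ≤ C * (q y + q (x - y)) := by
  simpa only [add_sub_cancel] using hq.map_add_le y (x - y)

end IsQuasiSeminorm

namespace IsQuasiBounded

section Closure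

variable {𝕜 E F X : Type*} [NormedField 𝕜] [SeminormedAddCommGroup E] [SeminormedAddCommGroup F]
  {q : X → ℝ} {C : ℝ} {f g : E → X}

theorem of_bound {K : ℝ} (h : ∀ u, q (f u) ≤ K * ‖u‖) : IsQuasiBounded q f :=
  ⟨|K|, abs_nonneg K, fun u => (h u).trans (by gcongr; exact le_abs_self K)⟩

theorem comp {M : ℝ} {φ : F → E} (hf : IsQuasiBounded q f) (hφ : ∀ u, ‖φ u‖ ≤ M * ‖u‖) :
    IsQuasiBounded q (fun u => f (φ u)) := by
  obtain ⟨K, hK, hf⟩ := hf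
  refine of_bound (K := K * M) fun u => ?_
  calc q (f (φ u)) ≤ K * ‖φ u‖ := hf _
    _ ≤ K * (M * ‖u‖) := by gcongr; exact hφ u
    _ = K * M * ‖u‖ := by ring

variable [AddCommGroup X] [Module 𝕜 X]

theorem of_le_mul {M : ℝ} (hq : IsQuasiSeminorm 𝕜 q C) (hf : IsQuasiBounded q f)
    (h : ∀ u, q (g u) ≤ M * q (f u)) : IsQuasiBounded q g := by
  obtain ⟨K, -, hf⟩ := hf
  refine of_bound (K := |M| * K) fun u => ?_
  have hfu : 0 ≤ q (f u) := hq.nonneg _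
  calc q (g u) ≤ M * q (f u) := h u
    _ ≤ |M| * (K * ‖u‖) := by gcongr; exacts [le_abs_self M, hf u]
    _ = |M| * K * ‖u‖ := by ring

theorem zero (hq : IsQuasiSeminorm 𝕜 q C) : IsQuasiBounded q (fun _ : E => 0) :=
  of_bound (K := 0) fun u => by rw [hq.map_zero, zero_mul]

theorem neg (hq : IsQuasiSeminorm 𝕜 q C) (hf : IsQuasiBounded q f) :
    IsQuasiBounded q (fun u => -f u) := by
  simpa only [IsQuasiBounded, hq.map_neg] using hf

theorem add (hq : IsQuasiSeminorm 𝕜 q C) (hf : IsQuasiBounded q f) (hg : IsQuasiBounded q g) :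
    IsQuasiBounded q (fun u => f u + g u) := by
  obtain ⟨K, -, hf⟩ := hf
  obtain ⟨L, -, hg⟩ := hg
  have hC := hq.modulus_pos
  refine of_bound (K := C * (K + L)) fun u => ?_
  calc q (f u + g u) ≤ C * (q (f u) + q (g u)) := hq.map_add_le _ _
    _ ≤ C * (K * ‖u‖ + L * ‖u‖) := by gcongr; exacts [hf u, hg u]
    _ = C * (K + L) * ‖u‖ := by ring

theorem add_iff_right (hq : IsQuasiSeminorm 𝕜 q C) (hf : IsQuasiBounded q f) :
    IsQuasiBounded q (fun u => f u + g u) ↔ IsQuasiBounded q g :=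
  ⟨fun h => by simpa only [neg_add_cancel_left] using (hf.neg hq).add hq h, hf.add hq⟩

theorem map_le_of_mem_closure [Module 𝕜 E] {T : E →ₗ[𝕜] X} (hT : IsQuasiBounded q T)
    (hq : IsQuasiSeminorm 𝕜 q C) {S : Set E} {m : ℝ} (hS : ∀ y ∈ S, q (T y) ≤ m) {u : E}
    (hu : u ∈ closure S) : q (T u) ≤ C * m := by
  obtain ⟨K, -, hT⟩ := hT
  have hC := hq.modulus_pos
  have hclosed : IsClosed {y : E | q (T u) ≤ C * (m + K * ‖u - y‖)} :=
    isClosed_le (by fun_prop) (by fun_prop)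
  have hsub : S ⊆ {y : E | q (T u) ≤ C * (m + K * ‖u - y‖)} := fun y hy =>
    calc q (T u) ≤ C * (q (T y) + q (T u - T y)) := hq.le_add_map_sub _ _
      _ ≤ C * (m + K * ‖u - y‖) := by
        rw [← map_sub]
        gcongr
        exacts [hS y hy, hT _]
  simpa using closure_minimal hsub hclosed hu

end Closure

end IsQuasiBounded

section BanachSteinhaus

variable {𝕜 E X ι : Type*} [NontriviallyNormedField 𝕜] [NormedAddCommGroup E] [NormedSpace 𝕜 E]
  [AddCommGroup X] [Module 𝕜 X] {q : X → ℝ} {C : ℝ}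

theorem IsQuasiSeminorm.map_le_of_forall_mem_ball (hq : IsQuasiSeminorm 𝕜 q C) {c : 𝕜}
    (hc : 1 < ‖c‖) {T : E →ₗ[𝕜] X} {u₀ : E} {r B : ℝ} (hr : 0 < r)
    (hB : ∀ v ∈ ball u₀ r, q (T v) ≤ B) (u : E) :
    q (T u) ≤ C * (B + B) * (r⁻¹ * ‖c‖) * ‖u‖ := by
  have hC := hq.modulus_pos
  have hsmall : ∀ v : E, ‖v‖ < r → q (T v) ≤ C * (B + B) := fun v hv =>
    calc q (T v) = q (T (u₀ + v) - T u₀) := by rw [← map_sub, add_sub_cancel_left]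
      _ ≤ C * (q (T (u₀ + v)) + q (T u₀)) := hq.map_sub_le _ _
      _ ≤ C * (B + B) := by
        gcongr
        exacts [hB _ (by simpa using hv), hB _ (mem_ball_self hr)]
  rcases eq_or_ne u 0 with rfl | hu
  · simp [hq.map_zero]
  obtain ⟨d, hd, hdu, -, hd_inv⟩ := rescale_to_shell hc hr hu
  calc q (T u) = ‖d‖⁻¹ * q (T (d • u)) := by
        rw [T.map_smul, hq.map_smul, inv_mul_cancel_left₀ (norm_ne_zero_iff.2 hd)]
    _ ≤ (r⁻¹ * ‖c‖ * ‖u‖) * (C * (B + B)) := by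
        gcongr
        exacts [hq.nonneg _, hsmall _ hdu]
    _ = C * (B + B) * (r⁻¹ * ‖c‖) * ‖u‖ := by ring

theorem IsQuasiSeminorm.banach_steinhaus [BaireSpace E] (hq : IsQuasiSeminorm 𝕜 q C)
    {T : ι → E →ₗ[𝕜] X} (hT : ∀ i, IsQuasiBounded q (T i))
    (hpt : ∀ u, BddAbove (Set.range fun i => q (T i u))) :
    ∃ M : ℝ, ∀ i u, q (T i u) ≤ M * ‖u‖ := by
  let S : ℕ → Set E := fun n => {u | ∀ i, q (T i u) ≤ n}
  have hcover : ⋃ n, closure (S n) = Set.univ := by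
    refine Set.eq_univ_of_forall fun u => Set.mem_iUnion.2 ?_
    obtain ⟨M, hM⟩ := hpt u
    obtain ⟨n, hn⟩ := exists_nat_ge M
    exact ⟨n, subset_closure fun i => (hM ⟨i, rfl⟩).trans hn⟩
  obtain ⟨n, u₀, hu₀⟩ := nonempty_interior_of_iUnion_of_closed (fun _ => isClosed_closure) hcover
  obtain ⟨r, hr, hball⟩ := Metric.mem_nhds_iff.1 (mem_interior_iff_mem_nhds.1 hu₀)
  obtain ⟨c, hc⟩ := NormedField.exists_one_lt_norm 𝕜
  exact ⟨_, fun i => hq.map_le_of_forall_mem_ball hc hr fun v hv =>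
    (hT i).map_le_of_mem_closure hq (fun y (hy : y ∈ S n) => hy i) (hball hv)⟩

theorem IsQuasiBounded.of_tendsto [BaireSpace E] (hq : IsQuasiSeminorm 𝕜 q C)
    {T : ℕ → E →ₗ[𝕜] X} {f : E → X} (hT : ∀ n, IsQuasiBounded q (T n))
    (hlim : ∀ u, Tendsto (fun n => q (f u - T n u)) atTop (𝓝 0)) : IsQuasiBounded q f := by
  have hC := hq.modulus_pos
  have hpt : ∀ u, BddAbove (Set.range fun n => q (T n u)) := by
    intro u
    obtain ⟨B, hB⟩ := (hlim u).bddAbove_range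
    refine ⟨C * (q (f u) + B), Set.forall_mem_range.2 fun n => ?_⟩
    calc q (T n u) ≤ C * (q (f u) + q (T n u - f u)) := hq.le_add_map_sub _ _
      _ ≤ C * (q (f u) + B) := by
        rw [hq.map_sub_rev]
        gcongr
        exact hB ⟨n, rfl⟩
  obtain ⟨M, hM⟩ := hq.banach_steinhaus hT hpt
  refine of_bound (K := C * M) fun u => ?_
  have hbound : ∀ n, q (f u) ≤ C * (M * ‖u‖ + q (f u - T n u)) := fun n =>
    (hq.le_add_map_sub _ (T n u)).trans (by gcongr; exact hM n u)
  have hlim' : Tendsto (fun n => C * (M * ‖u‖ + q (f u - T n u))) atTop (𝓝 (C * M * ‖u‖)) := by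
    simpa only [add_zero, mul_assoc] using ((hlim u).const_add (M * ‖u‖)).const_mul C
  exact ge_of_tendsto' hlim' hbound

end BanachSteinhaus

section RingroseIdeal

variable {𝕜 A X : Type*} [NormedField 𝕜] [NormedRing A] [AddCommGroup X] [Module 𝕜 X]
  [Module A X] [Module Aᵐᵒᵖ X] {q : X → ℝ} {C L R : ℝ}

theorem isQuasiBounded_mul_iff_smul (hq : IsQuasiSeminorm 𝕜 q C)
    (hright : ∀ (b : A) (x : X), q (op b • x) ≤ R * ‖b‖ * q x) {δ : A → X}
    (hδ : ∀ a b : A, δ (a * b) = op b • δ a + a • δ b) (x : A) :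
    IsQuasiBounded q (fun u => δ (x * u)) ↔ IsQuasiBounded q (fun u => x • δ u) := by
  have hinner : IsQuasiBounded q (fun u : A => op u • δ x) :=
    .of_bound (K := R * q (δ x)) fun u => (hright u (δ x)).trans_eq (by ring)
  simpa only [hδ] using hinner.add_iff_right hq

variable [Module 𝕜 A]

/-- The Ringrose ideal (or continuity ideal) of a derivation `δ`: the elements `x` for which
`u ↦ δ (x * u)` is bounded. -/
def ringroseIdeal (hq : IsQuasiSeminorm 𝕜 q C)
    (hleft : ∀ (a : A) (x : X), q (a • x) ≤ L * ‖a‖ * q x)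
    (hright : ∀ (b : A) (x : X), q (op b • x) ≤ R * ‖b‖ * q x) (δ : A →ₗ[𝕜] X)
    (hδ : ∀ a b : A, δ (a * b) = op b • δ a + a • δ b) : TwoSidedIdeal A :=
  .mk' {x | IsQuasiBounded q fun u => δ (x * u)}
    (by simpa only [Set.mem_ofPred_eq, zero_mul, map_zero] using IsQuasiBounded.zero hq)
    (fun hx hy => by
      simpa only [Set.mem_ofPred_eq, add_mul, map_add] using IsQuasiBounded.add hq hx hy)
    (fun hx => by simpa only [Set.mem_ofPred_eq, neg_mul, map_neg] using IsQuasiBounded.neg hq hx)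
    (fun {a x} hx => by
      simp only [Set.mem_ofPred_eq, isQuasiBounded_mul_iff_smul hq hright hδ] at hx ⊢
      exact hx.of_le_mul hq fun u => by simpa only [mul_smul] using hleft a (x • δ u))
    (fun {x a} hx => by
      simpa only [Set.mem_ofPred_eq, mul_assoc] using IsQuasiBounded.comp hx (norm_mul_le a))

theorem coe_ringroseIdeal (hq : IsQuasiSeminorm 𝕜 q C)
    (hleft : ∀ (a : A) (x : X), q (a • x) ≤ L * ‖a‖ * q x)
    (hright : ∀ (b : A) (x : X), q (op b • x) ≤ R * ‖b‖ * q x) (δ : A →ₗ[𝕜] X)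
    (hδ : ∀ a b : A, δ (a * b) = op b • δ a + a • δ b) :
    (ringroseIdeal hq hleft hright δ hδ : Set A) = {x | IsQuasiBounded q fun u => δ (x * u)} :=
  TwoSidedIdeal.coe_mk' ..

end RingroseIdeal

section Closedness

variable {𝕜 A X : Type*} [NontriviallyNormedField 𝕜] [NormedRing A] [NormedAlgebra 𝕜 A]
  [AddCommGroup X] [Module 𝕜 X] [Module A X] {q : X → ℝ} {C L R : ℝ} [BaireSpace A]
  [SMulCommClass A 𝕜 X]

theorem isClosed_setOf_isQuasiBounded_smul (hq : IsQuasiSeminorm 𝕜 q C)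
    (hleft : ∀ (a : A) (x : X), q (a • x) ≤ L * ‖a‖ * q x) (δ : A →ₗ[𝕜] X) :
    IsClosed {x : A | IsQuasiBounded q fun u => x • δ u} := by
  refine IsSeqClosed.isClosed fun y x hy hyx => ?_
  refine IsQuasiBounded.of_tendsto hq
    (T := fun n => DistribSMul.toLinearMap 𝕜 X (y n) ∘ₗ δ) hy fun u => ?_
  have hdist : Tendsto (fun n => L * ‖x - y n‖ * q (δ u)) atTop (𝓝 0) := by
    simpa using ((hyx.const_sub x).norm.const_mul L).mul_const (q (δ u))
  refine squeeze_zero (fun _ => hq.nonneg _) (fun n => ?_) hdist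
  simpa only [sub_smul, LinearMap.comp_apply, DistribSMul.toLinearMap_apply]
    using hleft (x - y n) (δ u)

theorem ringrose_ideal_closed_twoSided_general [Module Aᵐᵒᵖ X]
    (hq : IsQuasiSeminorm 𝕜 q C) (hleft : ∀ (a : A) (x : X), q (a • x) ≤ L * ‖a‖ * q x)
    (hright : ∀ (b : A) (x : X), q (op b • x) ≤ R * ‖b‖ * q x) (δ : A →ₗ[𝕜] X)
    (hδ : ∀ a b : A, δ (a * b) = op b • δ a + a • δ b) (J : Set A)
    (hJ : J = {x : A | IsQuasiBounded q fun u => δ (x * u)}) :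
    IsClosed J ∧
    (0 : A) ∈ J ∧
    (∀ x ∈ J, ∀ y ∈ J, x + y ∈ J) ∧
    (∀ x ∈ J, -x ∈ J) ∧
    (∀ a : A, ∀ x ∈ J, a * x ∈ J ∧ x * a ∈ J) ∧
    J = {x : A | IsQuasiBounded q fun u => x • δ u} := by
  let I := ringroseIdeal hq hleft hright δ hδ
  have hJI : J = I := hJ.trans (coe_ringroseIdeal ..).symm
  have hJ_smul : J = {x : A | IsQuasiBounded q fun u => x • δ u} := by
    simpa only [isQuasiBounded_mul_iff_smul hq hright hδ] using hJ
  have hclosed : IsClosed J := hJ_smul ▸ isClosed_setOf_isQuasiBounded_smul hq hleft δ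
  refine ⟨hclosed, ?_, ?_, ?_, ?_, hJ_smul⟩ <;> rw [hJI]
  · exact I.zero_mem
  · exact fun _ hx _ hy => I.add_mem hx hy
  · exact fun _ hx => I.neg_mem hx
  · exact fun a x hx => ⟨I.mul_mem_left a x hx, I.mul_mem_right x a hx⟩

end Closedness

theorem ringrose_ideal_closed_twoSided
    (A X : Type*) [NormedRing A] [StarRing A] [CStarRing A]
    [NormedAlgebra ℂ A] [CompleteSpace A] [StarModule ℂ A]
    [AddCommGroup X] [Module ℂ X]
    [Module A X] [Module Aᵐᵒᵖ X] [SMulCommClass A Aᵐᵒᵖ X]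
    [IsScalarTower ℂ A X] [IsScalarTower ℂ Aᵐᵒᵖ X]
    (q : X → ℝ) (C : ℝ) (hC : 1 ≤ C)
    (hq_nonneg : ∀ x : X, 0 ≤ q x)
    (hq_def : ∀ x : X, q x = 0 ↔ x = 0)
    (hq_smul : ∀ (α : ℂ) (x : X), q (α • x) = ‖α‖ * q x)
    (hq_add : ∀ x y : X, q (x + y) ≤ C * (q x + q y))
    (hq_mod : ∀ (a b : A) (x : X), q (a • (op b • x)) ≤ ‖a‖ * ‖b‖ * q x)
    (δ : A →ₗ[ℂ] X)
    (hδ : ∀ a b : A, δ (a * b) = op b • δ a + a • δ b)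
    (J : Set A)
    (hJ : J = {x : A | ∃ K : ℝ, 0 ≤ K ∧ ∀ u : A, q (δ (x * u)) ≤ K * ‖u‖}) :
    IsClosed J ∧
    (0 : A) ∈ J ∧
    (∀ x ∈ J, ∀ y ∈ J, x + y ∈ J) ∧
    (∀ x ∈ J, -x ∈ J) ∧
    (∀ a : A, ∀ x ∈ J, a * x ∈ J ∧ x * a ∈ J) ∧
    J = {x : A | ∃ K : ℝ, 0 ≤ K ∧ ∀ u : A, q (x • δ u) ≤ K * ‖u‖} :=
  ringrose_ideal_closed_twoSided_general ⟨hC, hq_smul, hq_add⟩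
    (L := ‖(1 : A)‖) (R := ‖(1 : A)‖) (fun a x => by simpa [mul_comm] using hq_mod a 1 x)
    (fun b x => by simpa using hq_mod 1 b x) δ hδ J hJ
end

section
/- Let M be a von Neumann algebra acting on a complex Hilbert space H and E a quasi-normed M-sub-bimodule of M with modulus of concavity C ≥ 1. If x ∈ E, then x* ∈ E and |x| ∈ E, and ‖x*‖_E = ‖|x|‖_E = ‖x‖_E. -/
set_option synthInstance.maxHeartbeats 1000000

/-!
In the polar decomposition `x = u|x|` the contraction `u` lies in `M`, and `|x| = u* x`. Thus
`x = u|x|`, `|x| = u* x`, `x* = u* x u*` and `x = u x* u` pass between `x`, `|x|` and `x*` by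
multiplying with contractions of `M`, which leaves `E` stable and does not increase the quasi-norm.

To see `u ∈ M`, take `y` in the commutant of `M`. As `|x|` and `x` commute with `y`, the operators
`u y` and `y u` agree on the range of `|x|`; its orthogonal complement is invariant under `y` and
annihilated by `u`, so both vanish there.
-/

open ContinuousLinearMap

section HilbertSpace

variable {𝕜 E F : Type*} [RCLike 𝕜] [NormedAddCommGroup F] [InnerProductSpace 𝕜 F]

theorem norm_le_norm_add_of_inner_eq_zero {v w : F} (h : inner 𝕜 v w = 0) : ‖v‖ ≤ ‖v + w‖ := by
  rw [mul_self_le_mul_self_iff (norm_nonneg v) (norm_nonneg (v + w)),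
    norm_add_sq_eq_norm_sq_add_norm_sq_of_inner_eq_zero v w h]
  exact le_add_of_nonneg_right (mul_self_nonneg _)

theorem dense_sup_orthogonal [CompleteSpace F] (K : Submodule 𝕜 F) :
    Dense ((K ⊔ Kᗮ : Submodule 𝕜 F) : Set F) := by
  rw [Submodule.dense_iff_topologicalClosure_eq_top, Submodule.topologicalClosure_eq_top_iff,
    ← Submodule.inf_orthogonal, Submodule.inf_orthogonal_eq_bot]

theorem ext_on_orthogonal [CompleteSpace F] {G : Type*} [TopologicalSpace G] [T2Space G]
    [AddCommMonoid G] [Module 𝕜 G] (K : Submodule 𝕜 F) {f g : F →L[𝕜] G} (hK : Set.EqOn f g K)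
    (hKperp : Set.EqOn f g Kᗮ) : f = g := by
  refine ContinuousLinearMap.ext_on (s := K ∪ Kᗮ) ?_ (hK.union hKperp)
  simpa only [Submodule.span_union, Submodule.span_eq] using dense_sup_orthogonal K

/-- Douglas factorization. -/
theorem exists_norm_le_one_comp_eq [CompleteSpace F] {G : Type*} [NormedAddCommGroup E]
    [NormedSpace 𝕜 E] [NormedAddCommGroup G] [NormedSpace 𝕜 G] [CompleteSpace G]
    (a : E →L[𝕜] G) (b : E →L[𝕜] F) (h : ∀ v, ‖a v‖ ≤ ‖b v‖) :
    ∃ u : F →L[𝕜] G, ‖u‖ ≤ 1 ∧ u ∘L b = a ∧ ∀ w ∈ b.rangeᗮ, u w = 0 := by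
  -- Prescribing `u` on `range b` and on its complement together makes the domain dense in `F`.
  let e : E × b.rangeᗮ →ₗ[𝕜] F := b.toLinearMap.coprod b.rangeᗮ.subtype
  let f : E × b.rangeᗮ →ₗ[𝕜] G := a.toLinearMap ∘ₗ LinearMap.fst 𝕜 E b.rangeᗮ
  have e_dense : DenseRange e := by
    rw [DenseRange, ← LinearMap.coe_range, LinearMap.range_coprod, Submodule.range_subtype]
    exact dense_sup_orthogonal b.range
  have f_le (p : E × b.rangeᗮ) : ‖f p‖ ≤ 1 * ‖e p‖ := by
    have inner_eq_zero : inner 𝕜 (b p.1) (p.2 : F) = 0 := p.2.2 _ ⟨p.1, rfl⟩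
    calc
      ‖a p.1‖ ≤ ‖b p.1‖ := h p.1
      _ ≤ ‖b p.1 + p.2‖ := norm_le_norm_add_of_inner_eq_zero inner_eq_zero
      _ = 1 * ‖e p‖ := (one_mul _).symm
  have extend_apply (p : E × b.rangeᗮ) : f.extendOfNorm e (e p) = f p :=
    LinearMap.extendOfNorm_eq e_dense ⟨1, f_le⟩ p
  refine ⟨f.extendOfNorm e, LinearMap.opNorm_extendOfNorm_le e_dense zero_le_one f_le, ?_, ?_⟩
  · ext v
    simpa [e, f] using extend_apply (v, 0)
  · intro w hw
    simpa [e, f] using extend_apply (0, ⟨w, hw⟩)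

theorem adjoint_apply_apply_of_norm_apply_eq [CompleteSpace F] [NormedAddCommGroup E]
    [InnerProductSpace 𝕜 E] [CompleteSpace E] {u : E →L[𝕜] F} (hu : ‖u‖ ≤ 1) {v : E}
    (hv : ‖u v‖ = ‖v‖) : adjoint u (u v) = v := by
  refine eq_of_norm_le_re_inner_eq_norm_sq (𝕜 := 𝕜) ?_ ?_
  · calc
      ‖adjoint u (u v)‖ ≤ 1 * ‖u v‖ := (adjoint u).le_of_opNorm_le (by simpa using hu) _
      _ = ‖v‖ := by rw [one_mul, hv]
  · rw [adjoint_inner_left, inner_self_eq_norm_sq, hv]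

theorem apply_mem_orthogonal_range_of_commute_star [CompleteSpace F] {b y : F →L[𝕜] F}
    (h : Commute (star b) y) {v : F} (hv : v ∈ b.rangeᗮ) : y v ∈ b.rangeᗮ := by
  rw [b.orthogonal_range, LinearMap.mem_ker] at hv ⊢
  calc
    star b (y v) = y (star b v) := congr($h v)
    _ = 0 := (congrArg y hv).trans y.map_zero

end HilbertSpace

section PolarDecomposition

variable {H : Type*} [NormedAddCommGroup H] [InnerProductSpace ℂ H] [CompleteSpace H]

theorem norm_cfcAbs_apply (x : H →L[ℂ] H) (v : H) : ‖CFC.abs x v‖ = ‖x v‖ := by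
  have adjoint_abs_comp_abs : adjoint (CFC.abs x) ∘L CFC.abs x = adjoint x ∘L x := by
    simpa only [(CFC.abs_nonneg x).isSelfAdjoint.adjoint_eq] using! CFC.abs_mul_abs x
  rw [apply_norm_eq_sqrt_inner_adjoint_left, apply_norm_eq_sqrt_inner_adjoint_left,
    adjoint_abs_comp_abs]

variable {M : VonNeumannAlgebra H}

theorem mem_iff_forall_commute_of_mem_commutant {x : H →L[ℂ] H} :
    x ∈ M ↔ ∀ y ∈ M.commutant, Commute x y := by
  conv_lhs => rw [← M.commutant_commutant, VonNeumannAlgebra.mem_commutant_iff]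
  exact forall₂_congr fun _ _ ↦ eq_comm

theorem cfcAbs_mem {x : H →L[ℂ] H} (hx : x ∈ M) : CFC.abs x ∈ M := by
  rw [mem_iff_forall_commute_of_mem_commutant] at hx ⊢
  exact fun y hy ↦ (hx y hy).cfcAbs_left (hx _ (star_mem hy))

theorem mem_of_mul_mem_of_eq_zero_on_orthogonal_range {u b : H →L[ℂ] H} (hb : b ∈ M)
    (hub : u * b ∈ M) (hu : ∀ v ∈ b.rangeᗮ, u v = 0) : u ∈ M := by
  have commute_b := mem_iff_forall_commute_of_mem_commutant.mp hb
  have commute_star_b := mem_iff_forall_commute_of_mem_commutant.mp (star_mem hb)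
  have commute_ub := mem_iff_forall_commute_of_mem_commutant.mp hub
  refine mem_iff_forall_commute_of_mem_commutant.mpr fun y hy ↦ ext_on_orthogonal b.range ?_ ?_
  · have u_mul_y_mul_b : u * y * b = y * u * b :=
      calc
        u * y * b = u * b * y := by rw [mul_assoc, ← commute_b y hy, mul_assoc]
        _ = y * u * b := by rw [commute_ub y hy, mul_assoc]
    rintro _ ⟨v, rfl⟩
    exact congr($u_mul_y_mul_b v)
  · intro v hv
    calc
      u (y v) = 0 := hu _ (apply_mem_orthogonal_range_of_commute_star (commute_star_b y hy) hv)
      _ = y (u v) := by rw [hu v hv, map_zero]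

theorem exists_norm_le_one_mul_cfcAbs_eq {x : H →L[ℂ] H} (hx : x ∈ M) :
    ∃ u ∈ M, ‖u‖ ≤ 1 ∧ u * CFC.abs x = x ∧ star u * x = CFC.abs x := by
  obtain ⟨u, hu, hux, hu_zero⟩ :=
    exists_norm_le_one_comp_eq x (CFC.abs x) fun v ↦ (norm_cfcAbs_apply x v).ge
  have hux_mem : u * CFC.abs x ∈ M := by rwa [mul_def, hux]
  have u_abs_apply (v : H) : u (CFC.abs x v) = x v := congr($hux v)
  refine ⟨u, ?_, hu, hux, ?_⟩
  · exact mem_of_mul_mem_of_eq_zero_on_orthogonal_range (cfcAbs_mem hx) hux_mem hu_zero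
  · ext v
    calc
      adjoint u (x v) = adjoint u (u (CFC.abs x v)) := by rw [u_abs_apply]
      _ = CFC.abs x v :=
        adjoint_apply_apply_of_norm_apply_eq hu (by rw [u_abs_apply, norm_cfcAbs_apply])

theorem quasiNormed_bimodule_star_abs_mem_general {α : Type*} [PartialOrder α]
    {E : Set (H →L[ℂ] H)} {nE : (H →L[ℂ] H) → α}
    (hE_bimod : ∀ a ∈ M, ∀ b ∈ M, ‖a‖ ≤ 1 → ‖b‖ ≤ 1 → ∀ x ∈ E, a * x * b ∈ E)
    (hn_bimod : ∀ a ∈ M, ∀ b ∈ M, ‖a‖ ≤ 1 → ‖b‖ ≤ 1 → ∀ x ∈ E, nE (a * x * b) ≤ nE x)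
    {x : H →L[ℂ] H} (hxM : x ∈ M) (hx : x ∈ E) :
    star x ∈ E ∧ CFC.abs x ∈ E ∧ nE (star x) = nE x ∧ nE (CFC.abs x) = nE x := by
  obtain ⟨u, huM, hu, u_abs, star_u_mul⟩ := exists_norm_le_one_mul_cfcAbs_eq hxM
  have hsuM : star u ∈ M := star_mem huM
  have hsu : ‖star u‖ ≤ 1 := (norm_star u).trans_le hu
  have hone : ‖(1 : H →L[ℂ] H)‖ ≤ 1 := norm_id_le
  have abs_mul_star : CFC.abs x * star u = star x := by
    rw [← (CFC.abs_nonneg x).isSelfAdjoint.star_eq, ← star_mul, u_abs]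
  have star_mul_u : star x * u = CFC.abs x := by
    rw [← (CFC.abs_nonneg x).isSelfAdjoint.star_eq, ← star_u_mul, star_mul, star_star]
  have abs_of_self : star u * x * 1 = CFC.abs x := by rw [mul_one, star_u_mul]
  have self_of_abs : u * CFC.abs x * 1 = x := by rw [mul_one, u_abs]
  have star_of_self : star u * x * star u = star x := by rw [star_u_mul, abs_mul_star]
  have self_of_star : u * star x * u = x := by rw [mul_assoc, star_mul_u, u_abs]
  have habs : CFC.abs x ∈ E := abs_of_self ▸ hE_bimod _ hsuM _ (one_mem M) hsu hone x hx
  have hstar : star x ∈ E := star_of_self ▸ hE_bimod _ hsuM _ hsuM hsu hsu x hx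
  refine ⟨hstar, habs, le_antisymm ?_ ?_, le_antisymm ?_ ?_⟩
  · simpa only [star_of_self] using hn_bimod _ hsuM _ hsuM hsu hsu x hx
  · simpa only [self_of_star] using hn_bimod _ huM _ huM hu hu _ hstar
  · simpa only [abs_of_self] using hn_bimod _ hsuM _ (one_mem M) hsu hone x hx
  · simpa only [self_of_abs] using hn_bimod _ huM _ (one_mem M) hu hone _ habs

end PolarDecomposition

theorem quasiNormed_bimodule_star_abs_mem
    (H : Type*) [NormedAddCommGroup H] [InnerProductSpace ℂ H] [CompleteSpace H]
    (M : VonNeumannAlgebra H)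
    (E : Set (H →L[ℂ] H)) (nE : (H →L[ℂ] H) → ℝ) (C : ℝ) (hC : 1 ≤ C)
    (hE_sub : E ⊆ (M : Set (H →L[ℂ] H)))
    (hE_zero : (0 : H →L[ℂ] H) ∈ E)
    (hE_add : ∀ x ∈ E, ∀ y ∈ E, x + y ∈ E)
    (hE_smul : ∀ (α : ℂ), ∀ x ∈ E, α • x ∈ E)
    (hE_bimod : ∀ a ∈ M, ∀ b ∈ M, ∀ x ∈ E, a * x * b ∈ E)
    (hn_nonneg : ∀ x ∈ E, 0 ≤ nE x)
    (hn_def : ∀ x ∈ E, (nE x = 0 ↔ x = 0))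
    (hn_smul : ∀ (α : ℂ), ∀ x ∈ E, nE (α • x) = ‖α‖ * nE x)
    (hn_add : ∀ x ∈ E, ∀ y ∈ E, nE (x + y) ≤ C * (nE x + nE y))
    (hn_bimod : ∀ a ∈ M, ∀ b ∈ M, ∀ x ∈ E, nE (a * x * b) ≤ ‖a‖ * ‖b‖ * nE x)
    (x : H →L[ℂ] H) (hx : x ∈ E) :
    star x ∈ E ∧ CFC.sqrt (star x * x) ∈ E ∧
      nE (star x) = nE x ∧ nE (CFC.sqrt (star x * x)) = nE x := by
  exact quasiNormed_bimodule_star_abs_mem_general (fun a ha b hb _ _ ↦ hE_bimod a ha b hb)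
    (fun a ha b hb ha1 hb1 y hy ↦ (hn_bimod a ha b hb y hy).trans <| mul_le_of_le_one_left
      (hn_nonneg y hy) (mul_le_one₀ ha1 (norm_nonneg b) hb1)) (hE_sub hx) hx
end
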